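/- Let X₁ and X₂ be topological spaces and let U be an open subset of X₁ × X₂ (with the product topology). Then the set {(F₁, F₂) ∈ F(X₁) × F(X₂) : (F₁ × F₂) ∩ U ≠ ∅} is open in F(X₁) × F(X₂), where each hyperspace of closed sets carries the lower Vietoris topology and F(X₁) × F(X₂) carries the product topology. -/

import Mathlib

open Topology

/-- The lower Vietoris topology on the hyperspace of closed subsets of `X`:
generated by the subbasis of sets `{F | F ∩ O ≠ ∅}` for `O` open in `X`. -/
def lowerVietoris (X : Type*) [TopologicalSpace X] :
    TopologicalSpace {F : Set X // IsClosed F} :=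
  TopologicalSpace.generateFrom
    {S | ∃ O : Set X, IsOpen O ∧ S = {F : {F : Set X // IsClosed F} | (F.1 ∩ O).Nonempty}}

theorem lowerHemicontinuous_lowerVietoris_val (X : Type*) [TopologicalSpace X] :
    letI := lowerVietoris X
    LowerHemicontinuous (Subtype.val : {F : Set X // IsClosed F} → Set X) := by
  let := lowerVietoris X
  rw [lowerHemicontinuous_iff_isOpen_inter_nonempty]
  exact fun O hO ↦ TopologicalSpace.isOpen_generateFrom_of_mem ⟨O, hO, rfl⟩

section Prod

variable {α β X Y : Type*} [TopologicalSpace α] [TopologicalSpace β]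
  [TopologicalSpace X] [TopologicalSpace Y]

theorem lowerHemicontinuousWithinAt_prod {f : α → Set X} {g : α → Set Y} {s : Set α} {a : α}
    (hf : LowerHemicontinuousWithinAt f s a) (hg : LowerHemicontinuousWithinAt g s a) :
    LowerHemicontinuousWithinAt (fun z ↦ f z ×ˢ g z) s a := by
  rw [lowerHemicontinuousWithinAt_iff] at hf hg ⊢
  rintro U hU ⟨⟨x, y⟩, ⟨hx, hy⟩, hxy⟩
  obtain ⟨V, W, hV, hW, hxV, hyW, hVW⟩ := isOpen_prod_iff.1 hU x y hxy
  filter_upwards [hf V hV ⟨x, hx, hxV⟩, hg W hW ⟨y, hy, hyW⟩] with z hfV hgW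
  have meets_box : ((f z ×ˢ g z) ∩ V ×ˢ W).Nonempty := by
    rw [Set.prod_inter_prod]
    exact hfV.prod hgW
  exact meets_box.mono (Set.inter_subset_inter_right _ hVW)

theorem lowerHemicontinuous_prod {f : α → Set X} {g : α → Set Y}
    (hf : LowerHemicontinuous f) (hg : LowerHemicontinuous g) :
    LowerHemicontinuous fun z ↦ f z ×ˢ g z := by
  rw [← lowerHemicontinuousOn_univ_iff] at hf hg ⊢
  exact fun z hz ↦ lowerHemicontinuousWithinAt_prod (hf z hz) (hg z hz)

theorem isOpen_pairs_prod_meets_general {f : α → Set X} {g : β → Set Y}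
    (hf : LowerHemicontinuous f) (hg : LowerHemicontinuous g)
    {U : Set (X × Y)} (hU : IsOpen U) :
    IsOpen {p : α × β | ((f p.1 ×ˢ g p.2) ∩ U).Nonempty} :=
  lowerHemicontinuous_iff_isOpen_inter_nonempty.1
    (lowerHemicontinuous_prod (hf.comp continuous_fst) (hg.comp continuous_snd)) U hU

end Prod

/-- For an open subset `U` of `X₁ × X₂`, the set
`{(F₁, F₂) ∈ F(X₁) × F(X₂) : (F₁ × F₂) ∩ U ≠ ∅}` is open in `F(X₁) × F(X₂)`,
where each hyperspace of closed sets carries the lower Vietoris topology and the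
product carries the product topology. -/
theorem isOpen_pairs_prod_meets {X₁ X₂ : Type*} [TopologicalSpace X₁] [TopologicalSpace X₂]
    (U : Set (X₁ × X₂)) (hU : IsOpen U) :
    IsOpen[@instTopologicalSpaceProd _ _ (lowerVietoris X₁) (lowerVietoris X₂)]
      {p : {F : Set X₁ // IsClosed F} × {F : Set X₂ // IsClosed F} |
        ((p.1.1 ×ˢ p.2.1) ∩ U).Nonempty} := by
  let := lowerVietoris X₁
  let := lowerVietoris X₂
  exact isOpen_pairs_prod_meets_general (lowerHemicontinuous_lowerVietoris_val X₁)
    (lowerHemicontinuous_lowerVietoris_val X₂) hU
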